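/- For every n ≥ 1 and all types (sets) X and Y, there is a bijection between: (1) the set of rooted forests on [n] equipped with a label in X on each edge and a label in Y on each root; and (2) the set of sequences of length n with entries in ([n] × X) ⊕ Y whose last entry lies in the Y summand. -/

import Mathlib

/-!
Orienting every edge towards the root turns a labelled rooted forest into a function
`g : [n] → ([n] × X) ⊕ Y` whose parent relation is acyclic: a non-root `v` records its parent and
the label of the edge joining them, a root records its own label
(`toForest_injective`, `toForest_surjective`, `nonempty_edgeSet_equiv`, `nonempty_labelled_equiv`).

Such functions are matched with sequences by a Prüfer code: remove the least leaf repeatedly and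
write down its value under `g`. Consider pairs `(σ, a)` where, for every `i`, `σ i` is the least
vertex outside `σ 0, …, σ (i - 1)` that is not named as a parent by `a i, …, a (n - 1)`
(`IsElim`). Given `a` with last entry in `Y`, at step `i` at most `i + (n - 1 - i) < n` vertices
are excluded, so `σ` exists and is unique. Given an acyclic `g`, a vertex of maximal rank among the
remaining ones is a leaf, so there is exactly one `σ` making `(σ, g ∘ σ)` such a pair. Hence both
`(σ, a) ↦ a` and `(σ, a) ↦ a ∘ σ⁻¹` are bijections onto their targets.
-/

/-- A rooted forest on `[n]`: an acyclic simple graph on `Fin n` together with a chosen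
set of roots containing exactly one vertex from each connected component. -/
structure RootedForest (n : ℕ) where
  graph : SimpleGraph (Fin n)
  acyclic : graph.IsAcyclic
  roots : Set (Fin n)
  existsUnique_root : ∀ v : Fin n, ∃! r, r ∈ roots ∧ graph.Reachable r v

namespace GenPrufer

/-- A partial parent function `p` (`none` marks roots) has no directed cycles. This is encoded
by a rank strictly decreasing from each vertex to its parent, which on `Fin n` is equivalent
to acyclicity. -/
def Ranked {n : ℕ} (p : Fin n → Option (Fin n)) : Prop :=
  ∃ h : Fin n → ℕ, ∀ v w, p v = some w → h w < h v

/-! ### Greedy enumeration -/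

/-- Greedy selection: repeatedly picking the least admissible vertex, where admissibility
depends only on the set of vertices already picked, enumerates all vertices in exactly one way. -/
theorem existsUnique_greedy {n : ℕ} (good : Finset (Fin n) → Set (Fin n))
    (hne : ∀ S : Finset (Fin n), S.card < n → (good S).Nonempty)
    (hdisj : ∀ S : Finset (Fin n), ∀ v ∈ good S, v ∉ S) :
    ∃! σ : Equiv.Perm (Fin n),
      ∀ i, IsLeast (good ((Finset.Iio i).image σ)) (σ i) := by
  have hleast : ∀ S : Finset (Fin n), S.card < n → ∃ v, IsLeast (good S) v := by
    intro S hS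
    obtain ⟨v, hv, hmin⟩ := WellFounded.has_min (wellFounded_lt) (good S) (hne S hS)
    exact ⟨v, hv, fun w hw => not_lt.1 (hmin w hw)⟩
  rcases Nat.eq_zero_or_pos n with rfl | hn
  · exact ⟨1, fun i => i.elim0, fun σ _ => Subsingleton.elim _ _⟩
  have hc : ∀ S : Finset (Fin n), ∃ v, S.card < n → IsLeast (good S) v := by
    intro S
    by_cases hS : S.card < n
    · exact (hleast S hS).imp fun _ h _ => h
    · exact ⟨⟨0, hn⟩, fun h => absurd h hS⟩
  choose c hc using hc
  let R : ℕ → Finset (Fin n) := fun k => Nat.rec ∅ (fun _ S => insert (c S) S) k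
  have hR : ∀ k, R (k + 1) = insert (c (R k)) (R k) := fun _ => rfl
  have hcard : ∀ k ≤ n, (R k).card = k := by
    intro k
    induction k with
    | zero => intro _; rfl
    | succ k ih =>
      intro hk
      have h := ih (by omega)
      rw [hR, Finset.card_insert_of_notMem (hdisj _ _ (hc _ (by omega)).1), h]
  have hmem : ∀ k, R k = (Finset.range k).image fun j => c (R j) := by
    intro k
    induction k with
    | zero => rfl
    | succ k ih => rw [hR, Finset.range_add_one, Finset.image_insert, ← ih]
  have himg : ∀ i : Fin n, (Finset.Iio i).image (fun j : Fin n => c (R j)) = R i := by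
    intro i
    rw [hmem i]
    ext v
    simp only [Finset.mem_image, Finset.mem_Iio, Finset.mem_range]
    constructor
    · rintro ⟨j, hj, rfl⟩
      exact ⟨j, hj, rfl⟩
    · rintro ⟨j, hj, rfl⟩
      exact ⟨⟨j, by omega⟩, hj, rfl⟩
  have hlt : ∀ i : Fin n, (R i).card < n := fun i => by rw [hcard i i.2.le]; exact i.2
  have hne' : ∀ i j : Fin n, i < j → c (R i) ≠ c (R j) := by
    intro i j hij he
    apply hdisj _ _ (hc _ (hlt j)).1
    rw [← he, ← himg j]
    exact Finset.mem_image_of_mem (fun j : Fin n => c (R j)) (Finset.mem_Iio.2 hij)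
  have hinj : Function.Injective fun i : Fin n => c (R i) := by
    intro i j he
    rcases lt_trichotomy i j with h | h | h
    · exact absurd he (hne' i j h)
    · exact h
    · exact absurd he.symm (hne' j i h)
  refine ⟨Equiv.ofBijective _ (Finite.injective_iff_bijective.1 hinj), ?_, ?_⟩
  · intro i
    have := hc _ (hlt i)
    simpa [himg i] using this
  · intro τ hτ
    ext1 i
    induction i using WellFoundedLT.induction with
    | ind i ih =>
      have h1 : (Finset.Iio i).image τ = R i := by
        rw [← himg i]
        exact Finset.image_congr fun j hj => ih j (by simpa using hj)
      have h2 := hτ i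
      rw [h1] at h2
      exact h2.unique (hc _ (hlt i))

/-! ### The Prüfer code of a parent function -/

section Code
variable {n : ℕ} {A : Type*} (par : A → Option (Fin n))

/-- `σ` is the Prüfer elimination order and `a i` the datum recorded when `σ i` is eliminated:
`σ i` is the least remaining vertex that is not the parent named by any datum `a j`, `j ≥ i`,
i.e. the least leaf of what remains. -/
def IsElim (σ : Equiv.Perm (Fin n)) (a : Fin n → A) : Prop :=
  ∀ i, IsLeast {v | v ∉ (Finset.Iio i).image σ ∧ ∀ j, i ≤ j → par (a j) ≠ some v} (σ i)

variable {par}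

/-- Parents are eliminated after their children. -/
theorem IsElim.lt {σ : Equiv.Perm (Fin n)} {a : Fin n → A} (h : IsElim par σ a)
    {i j : Fin n} (hij : par (a i) = some (σ j)) : i < j := by
  by_contra hle
  exact (h j).1.2 i (not_lt.1 hle) hij

theorem IsElim.last {σ : Equiv.Perm (Fin n)} {a : Fin n → A} (h : IsElim par σ a)
    {l : Fin n} (hl : (l : ℕ) + 1 = n) : par (a l) = none := by
  by_contra hne
  obtain ⟨v, hv⟩ := Option.ne_none_iff_exists'.1 hne
  have := h.lt (j := σ.symm v) (by simpa using hv)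
  rw [Fin.lt_def] at this
  omega

theorem IsElim.ranked {σ : Equiv.Perm (Fin n)} {a : Fin n → A} (h : IsElim par σ a) :
    Ranked (par ∘ a ∘ σ.symm) := by
  refine ⟨fun v => n - σ.symm v, fun v w hvw => ?_⟩
  have := h.lt (i := σ.symm v) (j := σ.symm w) (by simpa using hvw)
  rw [Fin.lt_def] at this
  simp only
  omega

/-- Decoding: a sequence whose last entry names no parent determines the elimination order. -/
theorem existsUnique_elim_of_last {l : Fin n} (hl : (l : ℕ) + 1 = n) (a : Fin n → A)
    (ha : par (a l) = none) : ∃! σ, IsElim par σ a := by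
  have key := existsUnique_greedy
    (fun S : Finset (Fin n) => {v | v ∉ S ∧ ∀ j : Fin n, S.card ≤ j → par (a j) ≠ some v})
    ?_ (fun S v hv => hv.1)
  · convert key using 3 with σ
    refine forall_congr' fun i => ?_
    have : ((Finset.Iio i).image σ).card = i := by
      rw [Finset.card_image_of_injective _ σ.injective, Fin.card_Iio]
    simp only [this, Fin.le_def]
  · intro S hS
    classical
    -- `T`: the parents named by the entries `j` with `|S| ≤ j < n - 1`; together with `S` they
    -- number at most `n - 1`, and the last entry names no parent
    let T : Finset (Fin n) := (Finset.Ico S.card (n - 1)).biUnion fun j =>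
      if h : j < n then (par (a ⟨j, h⟩)).toFinset else ∅
    have hT : T.card ≤ n - 1 - S.card := by
      refine (Finset.card_biUnion_le_card_mul _ _ 1 ?_).trans (by simp)
      intro j _
      split_ifs with h
      · cases par (a ⟨j, h⟩) <;> simp
      · simp
    have hcard : (S ∪ T).card < (Finset.univ : Finset (Fin n)).card := by
      have := Finset.card_union_le S T
      rw [Finset.card_univ, Fintype.card_fin]
      omega
    obtain ⟨v, -, hv⟩ := Finset.exists_mem_notMem_of_card_lt_card hcard
    rw [Finset.mem_union, not_or] at hv
    refine ⟨v, hv.1, fun j hj hjv => ?_⟩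
    by_cases hjn : (j : ℕ) = n - 1
    · have : j = l := Fin.ext (by omega)
      rw [this, ha] at hjv
      cases hjv
    · apply hv.2
      refine Finset.mem_biUnion.2 ⟨j, Finset.mem_Ico.2 ⟨hj, by omega⟩, ?_⟩
      simp [hjv]

/-- Encoding: acyclic data `g` attached to the vertices determine the elimination order. -/
theorem existsUnique_elim_of_ranked (g : Fin n → A) (hg : Ranked (par ∘ g)) :
    ∃! σ : Equiv.Perm (Fin n), IsElim par σ (g ∘ σ) := by
  have key := existsUnique_greedy
    (fun S : Finset (Fin n) => {v | v ∉ S ∧ ∀ w ∉ S, par (g w) ≠ some v})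
    ?_ (fun S v hv => hv.1)
  · convert key using 3 with σ
    refine forall_congr' fun i => ?_
    have : ∀ v, (∀ j, i ≤ j → par ((g ∘ σ) j) ≠ some v) ↔
        ∀ w ∉ (Finset.Iio i).image σ, par (g w) ≠ some v := by
      intro v
      rw [← σ.forall_congr_right (q := fun w => w ∉ (Finset.Iio i).image σ → par (g w) ≠ some v)]
      simp
    simp only [this]
  · intro S hS
    obtain ⟨h, hh⟩ := hg
    have hne : (Sᶜ).Nonempty := by
      rw [← Finset.card_pos, Finset.card_compl, Fintype.card_fin]
      omega
    -- a vertex of maximal rank outside `S` is a leaf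
    obtain ⟨v, hv, hmax⟩ := Finset.exists_max_image Sᶜ h hne
    refine ⟨v, by simpa using hv, fun w hw hwv => ?_⟩
    exact absurd (hmax w (by simpa using hw)) (not_le.2 (hh w v hwv))

/-- The Prüfer correspondence for parent functions with arbitrary decorations. Both sides are
projections of the set of pairs `(σ, a)` with `IsElim par σ a`: to `a` and to `a ∘ σ⁻¹`. -/
theorem nonempty_ranked_equiv_last {l : Fin n} (hl : (l : ℕ) + 1 = n) :
    Nonempty ({g : Fin n → A // Ranked (par ∘ g)} ≃
      {a : Fin n → A // par (a l) = none}) := by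
  let T := {t : Equiv.Perm (Fin n) × (Fin n → A) // IsElim par t.1 t.2}
  let e₁ : T → {a : Fin n → A // par (a l) = none} :=
    fun t => ⟨t.1.2, t.2.last hl⟩
  let e₂ : T → {g : Fin n → A // Ranked (par ∘ g)} :=
    fun t => ⟨t.1.2 ∘ t.1.1.symm, t.2.ranked⟩
  have h₁ : Function.Bijective e₁ := by
    constructor
    · rintro ⟨⟨σ, a⟩, h⟩ ⟨⟨τ, b⟩, h'⟩ heq
      obtain rfl : a = b := congrArg Subtype.val heq
      obtain rfl : σ = τ := (existsUnique_elim_of_last hl a (h.last hl)).unique h h'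
      rfl
    · rintro ⟨a, ha⟩
      obtain ⟨σ, hσ, -⟩ := existsUnique_elim_of_last hl a ha
      exact ⟨⟨(σ, a), hσ⟩, rfl⟩
  have h₂ : Function.Bijective e₂ := by
    constructor
    · rintro ⟨⟨σ, a⟩, h⟩ ⟨⟨τ, b⟩, h'⟩ heq
      have heq : a ∘ σ.symm = b ∘ τ.symm := congrArg Subtype.val heq
      have ha : (a ∘ σ.symm) ∘ σ = a := by ext; simp
      have hb : (a ∘ σ.symm) ∘ τ = b := by rw [heq]; ext; simp
      obtain rfl : σ = τ := (existsUnique_elim_of_ranked _ h.ranked).unique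
        (by rw [ha]; exact h) (by rw [hb]; exact h')
      obtain rfl : a = b := ha.symm.trans hb
      rfl
    · rintro ⟨g, hg⟩
      obtain ⟨σ, hσ, -⟩ := existsUnique_elim_of_ranked g hg
      exact ⟨⟨(σ, g ∘ σ), hσ⟩, Subtype.ext (by ext; simp [e₂])⟩
  exact ⟨(Equiv.ofBijective e₂ h₂).symm.trans (Equiv.ofBijective e₁ h₁)⟩

end Code

/-! ### Rooted forests as parent functions -/

section Forest
variable {n : ℕ} {p : Fin n → Option (Fin n)}

/-- The undirected graph joining each non-root vertex to its parent. -/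
def parentGraph (p : Fin n → Option (Fin n)) (hp : Ranked p) : SimpleGraph (Fin n) where
  Adj u v := p u = some v ∨ p v = some u
  symm := ⟨fun _ _ h => h.symm⟩
  loopless := ⟨fun v h => by
    obtain ⟨r, hr⟩ := hp
    exact lt_irrefl _ (hr v v (h.elim id id))⟩

theorem parentGraph_isAcyclic (hp : Ranked p) : (parentGraph p hp).IsAcyclic := by
  intro v c hc
  have ⟨r, hr⟩ := hp
  -- rotate the cycle so that it starts at a vertex of maximal rank: both its neighbours
  -- on the cycle would be its parent
  obtain ⟨u, hu, hmax⟩ := Finset.exists_max_image c.support.toFinset r ⟨v, by simp⟩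
  rw [List.mem_toFinset] at hu
  have hd := hc.rotate hu
  have hle : ∀ w ∈ (c.rotate u hu).support, r w ≤ r u := fun w hw =>
    hmax w (by simpa using hw)
  have hpar : ∀ w ∈ (c.rotate u hu).support, (parentGraph p hp).Adj u w → p u = some w := by
    intro w hw hadj
    refine hadj.resolve_right fun h => ?_
    exact absurd (hle w hw) (not_le.2 (hr _ _ h))
  have h1 := hpar _ (SimpleGraph.Walk.getVert_mem_support _ _)
    ((c.rotate u hu).adj_snd hd.not_nil)
  have h2 := hpar _ (SimpleGraph.Walk.getVert_mem_support _ _)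
    ((c.rotate u hu).adj_penultimate hd.not_nil).symm
  exact hd.snd_ne_penultimate (Option.some.inj (h1.symm.trans h2))

/-- The map sending each vertex to the end of its chain of ancestors. -/
theorem exists_rootMap (hp : Ranked p) : ∃ ρ : Fin n → Fin n,
    (∀ v, p (ρ v) = none) ∧ (∀ v, (parentGraph p hp).Reachable v (ρ v)) ∧
    (∀ u v, (parentGraph p hp).Reachable u v → ρ u = ρ v) ∧ ∀ v, p v = none → ρ v = v := by
  have ⟨r, hr⟩ := hp
  have key : ∀ v, ∃ w, p w = none ∧ Relation.ReflTransGen (fun a b => p a = some b) v w := by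
    intro v
    induction hk : r v using Nat.strong_induction_on generalizing v with
    | _ k ih =>
      cases hv : p v with
      | none => exact ⟨v, hv, .refl⟩
      | some w =>
        obtain ⟨x, hx, hwx⟩ := ih (r w) (hk ▸ hr v w hv) w rfl
        exact ⟨x, hx, .head hv hwx⟩
  have huniq : ∀ v w x, p w = none → Relation.ReflTransGen (fun a b => p a = some b) v w →
      p x = none → Relation.ReflTransGen (fun a b => p a = some b) v x → w = x := by
    intro v w x hw hvw hx hvx
    induction hvw using Relation.ReflTransGen.head_induction_on with
    | refl =>
      cases hvx using Relation.ReflTransGen.head_induction_on with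
      | refl => rfl
      | head h _ => simp [hw] at h
    | head h _ ih =>
      cases hvx using Relation.ReflTransGen.head_induction_on with
      | refl => simp [hx] at h
      | head h' h'' =>
        rw [h] at h'
        cases h'
        exact ih h''
  choose ρ hρ hvρ using key
  refine ⟨ρ, hρ, fun v => ?_, ?_, fun v hv => huniq v _ _ (hρ v) (hvρ v) hv .refl⟩
  · rw [SimpleGraph.reachable_iff_reflTransGen]
    exact Relation.ReflTransGen.mono (fun a b h => Or.inl h) _ _ (hvρ v)
  · have hstep : ∀ u v, p u = some v → ρ u = ρ v := fun u v h =>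
      huniq u _ _ (hρ u) (hvρ u) (hρ v) (.head h (hvρ v))
    intro u v huv
    rw [SimpleGraph.reachable_iff_reflTransGen] at huv
    induction huv with
    | refl => rfl
    | tail _ h ih => exact ih.trans (h.elim (hstep _ _) fun h => (hstep _ _ h).symm)

/-- The rooted forest of an acyclic parent function; its roots are the parentless vertices. -/
def toForest (p : {p : Fin n → Option (Fin n) // Ranked p}) : RootedForest n where
  graph := parentGraph p.1 p.2
  acyclic := parentGraph_isAcyclic p.2
  roots := {v | p.1 v = none}
  existsUnique_root v := by
    obtain ⟨ρ, h1, h2, h3, h4⟩ := exists_rootMap p.2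
    exact ⟨ρ v, ⟨h1 v, (h2 v).symm⟩, fun r ⟨hr, hrv⟩ => (h4 r hr).symm.trans (h3 _ _ hrv)⟩

/-- Graph and roots determine the parent function: proceed by induction on rank, using that a
neighbour of `v` is either its parent or one of its children. -/
theorem toForest_injective : Function.Injective (toForest (n := n)) := by
  rintro ⟨p, hp⟩ ⟨q, hq⟩ heq
  have hadj : ∀ u v, (p u = some v ∨ p v = some u) ↔ (q u = some v ∨ q v = some u) := by
    intro u v
    have := congrArg (fun F => F.graph.Adj u v) heq
    exact iff_of_eq this
  have hroot : ∀ v, p v = none ↔ q v = none := by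
    intro v
    have := congrArg (fun F => v ∈ F.roots) heq
    exact iff_of_eq this
  refine Subtype.ext (funext fun v => ?_)
  change p v = q v
  have ⟨r, hr⟩ := hp
  induction hk : r v using Nat.strong_induction_on generalizing v with
  | _ k ih =>
    cases hv : p v with
    | none => exact ((hroot v).1 hv).symm
    | some w =>
      have hlt := hr v w hv
      have hw : p w = q w := ih _ (hk ▸ hlt) w rfl
      rcases (hadj v w).1 (Or.inl hv) with h | h
      · exact h.symm
      · have := hr w v (hw.trans h)
        omega

/-- Every rooted forest arises, the parent of `v` being a neighbour closer to the root. -/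
theorem toForest_surjective : Function.Surjective (toForest (n := n)) := by
  classical
  rintro ⟨G, hG, R, hR⟩
  choose ρ hρ hρu using id hR
  have hρadj : ∀ u v, G.Reachable u v → ρ u = ρ v := fun u v h =>
    hρu v _ ⟨(hρ u).1, (hρ u).2.trans h⟩
  have hstep : ∀ v, v ∉ R → ∃ w, G.Adj v w ∧ G.dist w (ρ w) < G.dist v (ρ v) := by
    intro v hv
    obtain ⟨c, hc⟩ := (hρ v).2.symm.exists_walk_length_eq_dist
    have hnil : ¬ c.Nil := SimpleGraph.Walk.not_nil_of_ne fun h => hv (h ▸ (hρ v).1)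
    refine ⟨c.snd, c.adj_snd hnil, ?_⟩
    rw [← hρadj _ _ (c.adj_snd hnil).reachable, ← hc, ← c.length_tail_add_one hnil]
    exact Nat.lt_succ_of_le (SimpleGraph.dist_le c.tail)
  choose! par hadj hdist using hstep
  let p : Fin n → Option (Fin n) := fun v => if v ∈ R then none else some (par v)
  have hpnone : ∀ v, p v = none ↔ v ∈ R := fun v => by simp [p]
  have hpsome : ∀ v w, p v = some w → v ∉ R ∧ par v = w := fun v w => by simp [p]
  have hp : Ranked p := ⟨fun v => G.dist v (ρ v), fun v w h => by
    obtain ⟨hv, rfl⟩ := hpsome v w h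
    exact hdist v hv⟩
  have hsub : ∀ u v, (parentGraph p hp).Adj u v → G.Adj u v := by
    have : ∀ u v, p u = some v → G.Adj u v := fun u v h => by
      obtain ⟨hv, rfl⟩ := hpsome u v h
      exact hadj u hv
    exact fun u v h => h.elim (this u v) fun h => (this v u h).symm
  have hgraph : parentGraph p hp = G := by
    ext u v
    refine ⟨hsub u v, fun huv => ?_⟩
    by_contra hnot
    -- the parent graph still joins `u` and `v` through their common root,
    -- although `uv` is a bridge of `G`
    refine SimpleGraph.isAcyclic_iff_forall_adj_isBridge.1 hG huv ?_
    have hle : parentGraph p hp ≤ G.deleteEdges {s(u, v)} := by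
      intro a b hab
      rw [SimpleGraph.deleteEdges_adj]
      refine ⟨hsub a b hab, fun he => hnot ?_⟩
      rcases Sym2.eq_iff.1 (Set.mem_singleton_iff.1 he) with ⟨rfl, rfl⟩ | ⟨rfl, rfl⟩
      · exact hab
      · exact hab.symm
    refine SimpleGraph.Reachable.mono hle ?_
    obtain ⟨τ, h1, h2, -, -⟩ := exists_rootMap hp
    have hτ : ∀ w, τ w = ρ w := fun w => hρu w _
      ⟨(hpnone _).1 (h1 w), ((h2 w).mono fun a b => hsub a b).symm⟩
    have := h2 u
    rw [hτ, hρadj u v huv.reachable, ← hτ] at this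
    exact this.trans (h2 v).symm
  have hroots : {v | p v = none} = R := Set.ext hpnone
  refine ⟨⟨p, hp⟩, ?_⟩
  simp only [toForest, RootedForest.mk.injEq]
  exact ⟨hgraph, hroots⟩

/-- Each edge corresponds to its child endpoint. -/
theorem nonempty_edgeSet_equiv (p : {p : Fin n → Option (Fin n) // Ranked p}) :
    Nonempty ({v // (p.1 v).isSome} ≃ (toForest p).graph.edgeSet) := by
  obtain ⟨p, hp⟩ := p
  have ⟨r, hr⟩ := hp
  refine ⟨Equiv.ofBijective (fun v => ⟨s(v.1, (p v.1).get v.2), Or.inl (by simp)⟩) ⟨?_, ?_⟩⟩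
  · rintro ⟨u, hu⟩ ⟨v, hv⟩ heq
    have h : s(u, (p u).get hu) = s(v, (p v).get hv) := congrArg Subtype.val heq
    rcases Sym2.eq_iff.1 h with ⟨h, -⟩ | ⟨h1, h2⟩
    · exact Subtype.ext h
    · have := hr u v (Option.eq_some_of_isSome hu |>.trans (congrArg some h2))
      have := hr v u (Option.eq_some_of_isSome hv |>.trans (congrArg some h1.symm))
      omega
  · rintro ⟨e, he⟩
    induction e using Sym2.ind with
    | _ u v =>
      have he : p u = some v ∨ p v = some u := he
      rcases he with h | h
      · exact ⟨⟨u, by simp [h]⟩, Subtype.ext (by simp [h])⟩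
      · exact ⟨⟨v, by simp [h]⟩, Subtype.ext (by simp [h, Sym2.eq_swap])⟩

/-- The parent named by a datum: an element of `Y` marks a root. -/
def par {n : ℕ} {X Y : Type*} : (Fin n × X) ⊕ Y → Option (Fin n) :=
  Sum.elim (fun a => some a.1) fun _ => none

/-- An acyclic parent function with labels in `X` on non-roots and in `Y` on roots is the same as
a single function to `([n] × X) ⊕ Y`. -/
theorem nonempty_labelled_equiv (X Y : Type*) :
    Nonempty (((p : {p : Fin n → Option (Fin n) // Ranked p}) ×
        ({v // (p.1 v).isSome} → X) × ({v // p.1 v = none} → Y)) ≃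
      {g : Fin n → (Fin n × X) ⊕ Y // Ranked (par ∘ g)}) := by
  let glue (p : Fin n → Option (Fin n)) (x : {v // (p v).isSome} → X)
      (y : {v // p v = none} → Y) (v : Fin n) : (Fin n × X) ⊕ Y :=
    if h : (p v).isSome then .inl ((p v).get h, x ⟨v, h⟩)
    else .inr (y ⟨v, by simpa using h⟩)
  have hpar : ∀ p x y, par ∘ glue p x y = p := by
    intro p x y
    funext v
    by_cases h : (p v).isSome
    · simp [glue, par, h]
    · have h' : p v = none := by simpa using h
      simp [glue, par, h']
  refine ⟨Equiv.ofBijective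
    (fun t => ⟨glue t.1.1 t.2.1 t.2.2, by rw [hpar]; exact t.1.2⟩) ⟨?_, ?_⟩⟩
  · rintro ⟨⟨p, hp⟩, x, y⟩ ⟨⟨q, hq⟩, x', y'⟩ heq
    have heq : glue p x y = glue q x' y' := congrArg Subtype.val heq
    obtain rfl : p = q := by rw [← hpar p x y, heq, hpar]
    obtain rfl : x = x' := by
      funext ⟨v, hv⟩
      simpa [glue, hv] using congrFun heq v
    obtain rfl : y = y' := by
      funext ⟨v, hv⟩
      have h : ¬ (p v).isSome := by simpa using hv
      simpa only [glue, dif_neg h, Sum.inr.injEq] using congrFun heq v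
    rfl
  · rintro ⟨g, hg⟩
    have hx : ∀ v : {v // ((par ∘ g) v).isSome}, ∃ x, g v = .inl (((par ∘ g) v).get v.2, x) := by
      rintro ⟨v, hv⟩
      cases h : g v with
      | inl a => exact ⟨a.2, by simp [par, h]⟩
      | inr b => simp [par, h] at hv
    have hy : ∀ v : {v // (par ∘ g) v = none}, ∃ y, g v = .inr y := by
      rintro ⟨v, hv⟩
      cases h : g v <;> simp_all [par]
    choose x hx using hx
    choose y hy using hy
    refine ⟨⟨⟨par ∘ g, hg⟩, x, y⟩, Subtype.ext (funext fun v => ?_)⟩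
    by_cases h : ((par ∘ g) v).isSome
    · simp only [glue, dif_pos h]
      exact (hx ⟨v, h⟩).symm
    · simp only [glue, dif_neg h]
      exact (hy ⟨v, by simpa using h⟩).symm

end Forest
end GenPrufer

open GenPrufer in
/-- Generalized Prüfer correspondence: rooted forests on `[n]` with a label in `X` on
each edge and a label in `Y` on each root are in bijection with sequences of length `n`
over `([n] × X) ⊕ Y` whose last entry lies in the `Y` summand. -/
theorem generalized_prufer_bijection (n : ℕ) (hn : 1 ≤ n) (X Y : Type*) :
    Nonempty (
      ((F : RootedForest n) × (F.graph.edgeSet → X) × ({v : Fin n // v ∈ F.roots} → Y)) ≃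
      {f : Fin n → (Fin n × X) ⊕ Y // (f ⟨n - 1, by omega⟩).isRight}) := by
  obtain ⟨e₁⟩ := nonempty_labelled_equiv (n := n) X Y
  obtain ⟨e₂⟩ := nonempty_ranked_equiv_last (par := par (n := n) (X := X) (Y := Y))
    (l := ⟨n - 1, by omega⟩) (by simp only; omega)
  have e₃ := fun p => (nonempty_edgeSet_equiv (n := n) p).some
  let e₀ := Equiv.sigmaCongr (β₁ := fun p : {p : Fin n → Option (Fin n) // Ranked p} =>
      ({v // (p.1 v).isSome} → X) × ({v // p.1 v = none} → Y))
    (β₂ := fun F : RootedForest n =>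
      (F.graph.edgeSet → X) × ({v : Fin n // v ∈ F.roots} → Y))
    (Equiv.ofBijective toForest ⟨toForest_injective, toForest_surjective⟩)
    fun p => Equiv.prodCongr ((e₃ p).arrowCongr (Equiv.refl X)) (Equiv.refl _)
  refine ⟨e₀.symm.trans (e₁.trans (e₂.trans (Equiv.subtypeEquivRight fun a => ?_)))⟩
  cases a ⟨n - 1, by omega⟩ <;> simp [par]
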